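/- arXiv:math/0605154 — 2 statements merged into one kernel-verified Lean document; each statement's English description precedes it below -/
import Mathlib

section
/- Let G be a finite simple graph and let a, b, c, d be four distinct vertices of G such that there do not exist two vertex-disjoint paths in G, one joining a to c and one joining b to d, whose internal vertices avoid {a,b,c,d} (this holds whenever G is a plane graph and a, b, c, d appear in that cyclic order on a face of G). Then M(G)·M(G−{a,b,c,d}) + M(G−{a,c})·M(G−{b,d}) = M(G−{a,b})·M(G−{c,d}) + M(G−{a,d})·M(G−{b,c}). -/
/-- A perfect matching of the induced subgraph of `G` on the vertex set `s`,
represented as a set `m` of edges of `G`: every edge of `m` is an edge of `G`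
with both endpoints in `s`, and every vertex of `s` lies in exactly one edge of `m`. -/
def IsPMOn {α : Type*} (G : SimpleGraph α) (s : Finset α) (m : Finset (Sym2 α)) : Prop :=
  (∀ e ∈ m, e ∈ G.edgeSet ∧ ∀ v ∈ e, v ∈ s) ∧ ∀ v ∈ s, ∃! e, e ∈ m ∧ v ∈ e

/-- The number of perfect matchings of the induced subgraph of `G` on `s`. -/
noncomputable def pmCount {α : Type*} (G : SimpleGraph α) (s : Finset α) : ℕ :=
  Nat.card {m : Finset (Sym2 α) // IsPMOn G s m}

open Classical in
/-- The sum, over all perfect matchings of the induced subgraph of `G` on `s`,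
of the product of the weights of the edges of the matching. -/
noncomputable def pmSum {α R : Type*} [Fintype α] [DecidableEq α] [CommRing R]
    (G : SimpleGraph α) (w : Sym2 α → R) (s : Finset α) : R :=
  ∑ m ∈ Finset.univ.filter (fun m : Finset (Sym2 α) => IsPMOn G s m), ∏ e ∈ m, w e

/-- There are two vertex-disjoint paths in `G`, one joining `x₁` to `y₁` and one joining
`x₂` to `y₂`, whose internal vertices avoid `S`. -/
def DisjointPaths {α : Type*} (G : SimpleGraph α) (S : Set α) (x₁ y₁ x₂ y₂ : α) : Prop :=
  ∃ (p : G.Walk x₁ y₁) (q : G.Walk x₂ y₂), p.IsPath ∧ q.IsPath ∧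
    (∀ u ∈ p.support, u ∉ q.support) ∧
    (∀ u ∈ p.support, u ≠ x₁ → u ≠ y₁ → u ∉ S) ∧
    (∀ u ∈ q.support, u ≠ x₂ → u ≠ y₂ → u ∉ S)

/-- `G` is noncrossing with respect to the cyclic sequence given by the list `L`:
there are no indices `i < j < k < l` such that `G` contains two vertex-disjoint paths,
one joining `L[i]` to `L[k]` and one joining `L[j]` to `L[l]`, whose internal vertices
avoid the vertices of `L`. -/
def NoncrossingList {α : Type*} (G : SimpleGraph α) (L : List α) : Prop :=
  ∀ i j k l : Fin L.length, i < j → j < k → k < l →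
    ¬ DisjointPaths G {x | x ∈ L} (L.get i) (L.get k) (L.get j) (L.get l)

/-- `U, W` form a bipartition of the vertices of `G`. -/
def IsBipartition {α : Type*} [Fintype α] [DecidableEq α]
    (G : SimpleGraph α) (U W : Finset α) : Prop :=
  Disjoint U W ∧ U ∪ W = Finset.univ ∧
    ∀ ⦃x y⦄, G.Adj x y → ((x ∈ U ∧ y ∈ W) ∨ (x ∈ W ∧ y ∈ U))

/-- `P` is an `MH`-alternating path, where `MH` is the unique perfect matching of the
induced subgraph of `G` on the vertex set `sH`: `P` is a (nontrivial) path, among any two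
consecutive edges of `P` exactly one lies in `MH`, and for each endpoint the incident edge
of `P` lies in `MH` iff the endpoint belongs to `sH`. -/
def IsAltPath {α : Type*} (G : SimpleGraph α) (sH : Finset α) (MH : Finset (Sym2 α))
    {x y : α} (P : G.Walk x y) : Prop :=
  P.IsPath ∧ P.edges ≠ [] ∧
  P.edges.Chain' (fun e f => e ∈ MH ↔ f ∉ MH) ∧
  (∀ e ∈ P.edges.head?, (e ∈ MH ↔ x ∈ sH)) ∧
  (∀ e ∈ P.edges.getLast?, (e ∈ MH ↔ y ∈ sH))

/-- A family of pairwise vertex-disjoint `MH`-alternating paths in `G` whose set of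
path-endpoints is exactly `A`, each vertex of `A` being an endpoint of exactly one
path of the family. -/
def IsAltPathNest {α : Type*} (G : SimpleGraph α) (sH : Finset α) (MH : Finset (Sym2 α))
    (A : Finset α) (F : Finset (Σ x : α, Σ y : α, G.Walk x y)) : Prop :=
  (∀ p ∈ F, IsAltPath G sH MH p.2.2) ∧
  (∀ p ∈ F, ∀ q ∈ F, p ≠ q → ∀ u ∈ p.2.2.support, u ∉ q.2.2.support) ∧
  (∀ p ∈ F, p.1 ∈ A ∧ p.2.1 ∈ A) ∧
  (∀ v ∈ A, ∃! p, p ∈ F ∧ (v = p.1 ∨ v = p.2.1))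

/-- A 1-factor on `{1, …, n}`: a partition of `Fin n` into pairs, each pair recorded
as an ordered pair `(i, j)` with `i < j`. -/
def IsOneFactor (n : ℕ) (F : Finset (Fin n × Fin n)) : Prop :=
  (∀ p ∈ F, p.1 < p.2) ∧ ∀ v : Fin n, ∃! p, p ∈ F ∧ (v = p.1 ∨ v = p.2)

/-- The crossing number of a 1-factor: the number of pairs of pairs
`(i,j), (k,l)` in `F` with `i < k < j < l`. -/
def crossingNumber (n : ℕ) (F : Finset (Fin n × Fin n)) : ℕ :=
  ((F ×ˢ F).filter (fun q => q.1.1 < q.2.1 ∧ q.2.1 < q.1.2 ∧ q.1.2 < q.2.2)).card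

/-!
Superimpose a perfect matching `M` of `s` and a perfect matching `N` of `t`. A connected component
`C` of `M ∪ N` has at most `|E(C)| + 1` vertices, while twice its number of edges, counted with
multiplicity, is `|s ∩ C| + |t ∩ C|`. Hence a component meeting the symmetric difference of `s`
and `t` meets it exactly twice. When that difference is `{a, b, c, d}`, pairing `a` with `c` would
pair `b` with `d` in another component and give the forbidden disjoint paths, so the component of
`a` contains exactly one of `b` and `d` besides `a`. Exchanging `M` and `N` on the component of `a`
is an involution on pairs of matchings, and it carries the pairs counted by one side of the
identity to those counted by the other.
-/

open Finset SimpleGraph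
open scoped symmDiff

section Basic

variable {α : Type*} {G : SimpleGraph α} {s : Finset α} {M : Finset (Sym2 α)}

theorem isPMOn_empty : IsPMOn G ∅ ∅ := by simp [IsPMOn]

namespace IsPMOn

theorem subset_sym2 (hM : IsPMOn G s M) : M ⊆ s.sym2 :=
  fun e he ↦ mem_sym2_iff.2 (hM.1 e he).2

theorem two_mul_card (hM : IsPMOn G s M) : 2 * #M = #s := by
  classical
  have hcover : M.biUnion Sym2.toFinset = s := by
    ext v
    simp only [mem_biUnion, Sym2.mem_toFinset]
    exact ⟨fun ⟨e, he, hve⟩ ↦ (hM.1 e he).2 v hve, fun hv ↦ (hM.2 v hv).exists⟩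
  have hdisj : (M : Set (Sym2 α)).PairwiseDisjoint Sym2.toFinset := by
    intro e he f hf hef
    refine disjoint_left.2 fun v hve hvf ↦ hef ?_
    rw [Sym2.mem_toFinset] at hve hvf
    exact (hM.2 v ((hM.1 e he).2 v hve)).unique ⟨he, hve⟩ ⟨hf, hvf⟩
  calc 2 * #M = ∑ e ∈ M, #e.toFinset := by
        rw [mul_comm, sum_const_nat fun e he ↦
          Sym2.card_toFinset_of_not_isDiag e (G.not_isDiag_of_mem_edgeSet (hM.1 e he).1)]
    _ = #s := by rw [← card_biUnion hdisj, hcover]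

end IsPMOn

open Classical in
/-- The finite set of perfect matchings of the induced subgraph of `G` on `s`, of which
`pmCount G s` is the cardinality. -/
noncomputable def perfectMatchings (G : SimpleGraph α) (s : Finset α) :
    Finset (Finset (Sym2 α)) :=
  {M ∈ s.sym2.powerset | IsPMOn G s M}

theorem mem_perfectMatchings : M ∈ perfectMatchings G s ↔ IsPMOn G s M := by
  classical
  rw [perfectMatchings, mem_filter, mem_powerset, and_iff_right_of_imp IsPMOn.subset_sym2]

theorem card_perfectMatchings : #(perfectMatchings G s) = pmCount G s := by
  rw [pmCount, ← Nat.card_eq_finsetCard]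
  exact Nat.card_congr (Equiv.subtypeEquivRight fun _ ↦ mem_perfectMatchings)

end Basic

section Exchange

variable {α : Type*} [DecidableEq α]

/-- The set obtained from `s` by replacing its part inside `C` by that of `t`. It is applied to
sets of vertices, and to sets of edges with `C.sym2` in the role of `C`. -/
def exchange (C s t : Finset α) : Finset α := (s \ C) ∪ (t ∩ C)

theorem mem_exchange {C s t : Finset α} {v : α} :
    v ∈ exchange C s t ↔ v ∈ s ∧ v ∉ C ∨ v ∈ t ∧ v ∈ C := by
  simp [exchange]

variable (C s t : Finset α)

theorem exchange_exchange : exchange C (exchange C s t) (exchange C t s) = s := by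
  ext v
  simp only [mem_exchange]
  tauto

theorem exchange_union_exchange : exchange C s t ∪ exchange C t s = s ∪ t := by
  ext v
  simp only [mem_union, mem_exchange]
  tauto

theorem exchange_symmDiff_inter : exchange (s ∆ t ∩ C) s t = exchange C s t := by
  ext v
  simp only [mem_exchange, mem_inter, mem_symmDiff]
  tauto

/-- Exchange, between the two sets of a pair, of their parts inside `C`. -/
def exchangePair (C : Finset α) (p : Finset α × Finset α) : Finset α × Finset α :=
  (exchange C p.1 p.2, exchange C p.2 p.1)

theorem exchangePair_involutive : Function.Involutive (exchangePair C) := fun p ↦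
  Prod.ext (exchange_exchange C p.1 p.2) (exchange_exchange C p.2 p.1)

theorem exchangePair_eq_comm {C : Finset α} {p q : Finset α × Finset α} :
    exchangePair C p = q ↔ exchangePair C q = p :=
  (exchangePair_involutive C).eq_iff.trans eq_comm

theorem exchangePair_symmDiff_inter (p : Finset α × Finset α) :
    exchangePair (p.1 ∆ p.2 ∩ C) p = exchangePair C p :=
  Prod.ext (exchange_symmDiff_inter C p.1 p.2)
    (symmDiff_comm p.1 p.2 ▸ exchange_symmDiff_inter C p.2 p.1)

end Exchange

section Component

variable {α : Type*}

/-- No edge of `E` leaves the vertex set `C`: an edge of `E` with one endpoint in `C` has both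
endpoints there. -/
def EdgeClosed (E : Finset (Sym2 α)) (C : Finset α) : Prop :=
  ∀ e ∈ E, ∀ v ∈ e, v ∈ C → e ∈ C.sym2

variable [DecidableEq α]

open Classical in
/-- The vertex set of the connected component of `a` in the graph with edge set `E`. Adding `a` to
the endpoints of edges of `E` makes it a `Finset` even when `α` is infinite. -/
noncomputable def edgeComponent (E : Finset (Sym2 α)) (a : α) : Finset α :=
  {v ∈ insert a (E.biUnion Sym2.toFinset) | (fromEdgeSet (E : Set (Sym2 α))).Reachable a v}

variable {E : Finset (Sym2 α)} {s : Finset α} {a v x y : α}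

theorem mem_edgeComponent :
    v ∈ edgeComponent E a ↔ (fromEdgeSet (E : Set (Sym2 α))).Reachable a v := by
  classical
  rw [edgeComponent, mem_filter, and_iff_right_of_imp]
  intro h
  rcases eq_or_ne v a with rfl | hva
  · exact mem_insert_self _ _
  · obtain ⟨w, hvw⟩ := mem_support_of_reachable hva h.symm
    have hE : s(v, w) ∈ E := ((fromEdgeSet_adj _).1 hvw).1
    exact mem_insert_of_mem (mem_biUnion.2 ⟨_, hE, by simp⟩)

theorem self_mem_edgeComponent : a ∈ edgeComponent E a := mem_edgeComponent.2 .rfl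

theorem edgeComponent_subset (hE : E ⊆ s.sym2) (ha : a ∈ s) : edgeComponent E a ⊆ s := by
  classical
  refine (filter_subset _ _).trans (insert_subset ha (biUnion_subset.2 fun e he v hv ↦ ?_))
  exact mem_sym2_iff.1 (hE he) v (Sym2.mem_toFinset.1 hv)

theorem edgeClosed_edgeComponent : EdgeClosed E (edgeComponent E a) := by
  intro e he v hve hv
  refine mem_sym2_iff.2 fun w hwe ↦ ?_
  rcases eq_or_ne v w with rfl | hvw
  · exact hv
  · have hadj : (fromEdgeSet (E : Set (Sym2 α))).Adj v w :=
      (fromEdgeSet_adj _).2 ⟨by rwa [← (Sym2.mem_and_mem_iff hvw).1 ⟨hve, hwe⟩], hvw⟩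
    exact mem_edgeComponent.2 ((mem_edgeComponent.1 hv).trans hadj.reachable)

theorem connected_induce_edgeComponent :
    ((fromEdgeSet (E : Set (Sym2 α))).induce (edgeComponent E a : Set α)).Connected := by
  have hsupp : (edgeComponent E a : Set α) =
      ((fromEdgeSet (E : Set (Sym2 α))).connectedComponentMk a).supp := by
    ext v
    simp [mem_edgeComponent, reachable_comm]
  rw [hsupp]
  exact ConnectedComponent.connected_toSimpleGraph _

theorem card_edgeComponent_le :
    #(edgeComponent E a) ≤ #(E ∩ (edgeComponent E a).sym2) + 1 := by
  let H := (fromEdgeSet (E : Set (Sym2 α))).induce (edgeComponent E a : Set α)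
  have hedges : Nat.card H.edgeSet ≤ #(E ∩ (edgeComponent E a).sym2) := by
    rw [← Nat.card_eq_finsetCard]
    refine Nat.card_le_card_of_injective (fun e ↦ ⟨e.1.map Subtype.val, ?_⟩) fun e f hef ↦
      Subtype.ext (Sym2.map.injective Subtype.val_injective (congrArg Subtype.val hef))
    obtain ⟨⟨x, y⟩, hxy⟩ := e
    have hE : s(x.1, y.1) ∈ E := ((fromEdgeSet_adj _).1 hxy).1
    exact mem_inter.2 ⟨hE, mk_mem_sym2_iff.2 ⟨x.2, y.2⟩⟩
  calc #(edgeComponent E a) = Nat.card (edgeComponent E a : Set α) := by simp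
    _ ≤ Nat.card H.edgeSet + 1 := connected_induce_edgeComponent.card_vert_le_card_edgeSet_add_one
    _ ≤ #(E ∩ (edgeComponent E a).sym2) + 1 := by gcongr

theorem exists_isPath_support_subset_edgeComponent {G : SimpleGraph α}
    (hG : fromEdgeSet (E : Set (Sym2 α)) ≤ G) (hy : y ∈ edgeComponent E x) :
    ∃ p : G.Walk x y, p.IsPath ∧ ∀ u ∈ p.support, u ∈ edgeComponent E x := by
  obtain ⟨p, hp⟩ := (mem_edgeComponent.1 hy).exists_isPath
  refine ⟨p.mapLe hG, (Walk.isPath_mapLe hG).2 hp, fun u hu ↦ ?_⟩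
  rw [Walk.support_mapLe_eq_support] at hu
  exact mem_edgeComponent.2 (p.takeUntil u hu).reachable

theorem disjoint_edgeComponent (h : y ∉ edgeComponent E x) :
    Disjoint (edgeComponent E x) (edgeComponent E y) :=
  disjoint_left.2 fun _ hx hy ↦
    h (mem_edgeComponent.2 ((mem_edgeComponent.1 hx).trans (mem_edgeComponent.1 hy).symm))

theorem disjointPaths_of_edgeComponent {G : SimpleGraph α} {X : Finset α} {x₁ y₁ x₂ y₂ : α}
    (hG : fromEdgeSet (E : Set (Sym2 α)) ≤ G) (h₁₂ : x₂ ∉ edgeComponent E x₁)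
    (h₁ : X ∩ edgeComponent E x₁ = {x₁, y₁}) (h₂ : X ∩ edgeComponent E x₂ = {x₂, y₂}) :
    DisjointPaths G X x₁ y₁ x₂ y₂ := by
  have hy₁ : y₁ ∈ edgeComponent E x₁ := (mem_inter.1 (h₁ ▸ by simp : y₁ ∈ X ∩ _)).2
  have hy₂ : y₂ ∈ edgeComponent E x₂ := (mem_inter.1 (h₂ ▸ by simp : y₂ ∈ X ∩ _)).2
  obtain ⟨p, hp, hpC⟩ := exists_isPath_support_subset_edgeComponent hG hy₁
  obtain ⟨q, hq, hqC⟩ := exists_isPath_support_subset_edgeComponent hG hy₂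
  refine ⟨p, q, hp, hq, fun u hup huq ↦
    disjoint_left.1 (disjoint_edgeComponent h₁₂) (hpC u hup) (hqC u huq), ?_, ?_⟩
  · intro u hu hux huy huX
    simpa [h₁, hux, huy] using mem_inter.2 ⟨mem_coe.1 huX, hpC u hu⟩
  · intro u hu hux huy huX
    simpa [h₂, hux, huy] using mem_inter.2 ⟨mem_coe.1 huX, hqC u hu⟩

end Component

section PerfectMatching

variable {α : Type*} [DecidableEq α] {G : SimpleGraph α} {C s t : Finset α} {M N : Finset (Sym2 α)}

namespace IsPMOn

theorem fromEdgeSet_union_le (hM : IsPMOn G s M) (hN : IsPMOn G t N) :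
    fromEdgeSet ((M ∪ N : Finset (Sym2 α)) : Set (Sym2 α)) ≤ G := by
  intro x y hxy
  rcases mem_union.1 ((fromEdgeSet_adj _).1 hxy).1 with h | h
  · exact (hM.1 _ h).1
  · exact (hN.1 _ h).1

theorem exchange (hM : IsPMOn G s M) (hN : IsPMOn G t N) (hC : EdgeClosed (M ∪ N) C) :
    IsPMOn G (exchange C s t) (exchange C.sym2 M N) := by
  have mem_iff_of_mem {v : α} (hv : v ∈ C) (e : Sym2 α) :
      e ∈ _root_.exchange C.sym2 M N ∧ v ∈ e ↔ e ∈ N ∧ v ∈ e := by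
    have := hC e
    grind [mem_exchange]
  have mem_iff_of_notMem {v : α} (hv : v ∉ C) (e : Sym2 α) :
      e ∈ _root_.exchange C.sym2 M N ∧ v ∈ e ↔ e ∈ M ∧ v ∈ e := by
    have : e ∈ C.sym2 → v ∉ e := fun he hve ↦ hv (mem_sym2_iff.1 he v hve)
    grind [mem_exchange]
  constructor
  · intro e he
    refine ⟨?_, fun v hve ↦ mem_exchange.2 ?_⟩
    · rcases mem_exchange.1 he with ⟨heM, -⟩ | ⟨heN, -⟩
      · exact (hM.1 e heM).1
      · exact (hN.1 e heN).1
    · by_cases hv : v ∈ C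
      · exact .inr ⟨(hN.1 e ((mem_iff_of_mem hv e).1 ⟨he, hve⟩).1).2 v hve, hv⟩
      · exact .inl ⟨(hM.1 e ((mem_iff_of_notMem hv e).1 ⟨he, hve⟩).1).2 v hve, hv⟩
  · intro v hv
    rcases mem_exchange.1 hv with ⟨hvs, hvC⟩ | ⟨hvt, hvC⟩
    · simpa only [mem_iff_of_notMem hvC] using hM.2 v hvs
    · simpa only [mem_iff_of_mem hvC] using hN.2 v hvt

theorem inter_sym2 (hM : IsPMOn G s M) (hC : EdgeClosed M C) :
    IsPMOn G (s ∩ C) (M ∩ C.sym2) := by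
  simpa [_root_.exchange] using isPMOn_empty.exchange hM (by simpa using hC)

theorem card_symmDiff_inter_edgeComponent (hM : IsPMOn G s M) (hN : IsPMOn G t N) {x : α}
    (hx : x ∈ s ∆ t) : #(s ∆ t ∩ edgeComponent (M ∪ N) x) = 2 := by
  set C := edgeComponent (M ∪ N) x
  have hclosed : EdgeClosed (M ∪ N) C := edgeClosed_edgeComponent
  have hs : 2 * #(M ∩ C.sym2) = #(s ∩ C) :=
    (hM.inter_sym2 fun e he ↦ hclosed e (mem_union_left N he)).two_mul_card
  have ht : 2 * #(N ∩ C.sym2) = #(t ∩ C) :=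
    (hN.inter_sym2 fun e he ↦ hclosed e (mem_union_right M he)).two_mul_card
  have hconn : #C ≤ #(M ∩ C.sym2) + #(N ∩ C.sym2) + 1 := by
    refine card_edgeComponent_le.trans (Nat.add_le_add_right ?_ 1)
    rw [union_inter_distrib_right]
    exact card_union_le _ _
  have hCsub : C ⊆ s ∪ t := by
    refine edgeComponent_subset (union_subset ?_ ?_) (symmDiff_subset_union hx)
    · exact hM.subset_sym2.trans (sym2_mono subset_union_left)
    · exact hN.subset_sym2.trans (sym2_mono subset_union_right)
  have hcount : #(s ∩ C) + #(t ∩ C) + #(s ∆ t ∩ C) = 2 * #C := by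
    have hunion : s ∩ C ∪ t ∩ C = C := by grind
    have hinter : C \ (s ∩ C ∩ (t ∩ C)) = s ∆ t ∩ C := by grind [mem_symmDiff]
    have := card_union_add_card_inter (s ∩ C) (t ∩ C)
    have := card_sdiff_add_card_eq_card
      (inter_subset_left.trans inter_subset_right : s ∩ C ∩ (t ∩ C) ⊆ C)
    grind
  have hpos : 0 < #(s ∆ t ∩ C) := card_pos.2 ⟨x, mem_inter.2 ⟨hx, self_mem_edgeComponent⟩⟩
  lia

theorem exists_symmDiff_inter_edgeComponent_eq_pair (hM : IsPMOn G s M) (hN : IsPMOn G t N)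
    {x : α} (hx : x ∈ s ∆ t) :
    ∃ y ≠ x, s ∆ t ∩ edgeComponent (M ∪ N) x = {x, y} := by
  have hmem : x ∈ s ∆ t ∩ edgeComponent (M ∪ N) x := mem_inter.2 ⟨hx, self_mem_edgeComponent⟩
  obtain ⟨y, hy⟩ := card_eq_one.1 <|
    (card_erase_of_mem hmem).trans (by rw [card_symmDiff_inter_edgeComponent hM hN hx])
  exact ⟨y, ne_of_mem_erase (hy ▸ mem_singleton_self y), by rw [← hy, insert_erase hmem]⟩

theorem symmDiff_inter_edgeComponent_eq_or_eq {a b c d : α} (hM : IsPMOn G s M)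
    (hN : IsPMOn G t N) (hst : s ∆ t = {a, b, c, d}) (hdist : [a, b, c, d].Nodup)
    (hnc : ¬ DisjointPaths G {a, b, c, d} a c b d) :
    s ∆ t ∩ edgeComponent (M ∪ N) a = {a, b} ∨ s ∆ t ∩ edgeComponent (M ∪ N) a = {a, d} := by
  have mem_X {x : α} : x ∈ s ∆ t ↔ x = a ∨ x = b ∨ x = c ∨ x = d := by simp [hst]
  obtain ⟨y, hya, hy⟩ := exists_symmDiff_inter_edgeComponent_eq_pair hM hN (mem_X.2 (.inl rfl))
  have hyX : y ∈ s ∆ t := inter_subset_left (hy.ge (by simp))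
  rcases mem_X.1 hyX with hy_eq | hy_eq | hy_eq | hy_eq <;> rw [hy_eq] at hy
  · exact absurd hy_eq hya
  · exact .inl hy
  · exfalso
    have hbX : b ∈ s ∆ t := mem_X.2 (.inr (.inl rfl))
    have hba : b ∉ edgeComponent (M ∪ N) a := by
      intro hb
      have : b ∈ ({a, c} : Finset α) := hy.le (mem_inter.2 ⟨hbX, hb⟩)
      grind
    obtain ⟨z, hzb, hz⟩ := exists_symmDiff_inter_edgeComponent_eq_pair hM hN hbX
    obtain ⟨hzX, hzC⟩ := mem_inter.1 (hz.ge (by simp) : z ∈ s ∆ t ∩ edgeComponent (M ∪ N) b)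
    have hza : z ∉ ({a, c} : Finset α) := fun h ↦
      disjoint_left.1 (disjoint_edgeComponent hba) (mem_inter.1 (hy.ge h)).2 hzC
    obtain rfl : z = d := by
      have := mem_X.1 hzX
      grind
    have hpaths := disjointPaths_of_edgeComponent (hM.fromEdgeSet_union_le hN) hba hy hz
    exact hnc (by simpa [hst] using hpaths)
  · exact .inr hy

theorem exchangePair_edgeComponent_eq_or_eq {a b c d : α} (hM : IsPMOn G s M)
    (hN : IsPMOn G t N) (hst : s ∆ t = {a, b, c, d}) (hdist : [a, b, c, d].Nodup)
    (hnc : ¬ DisjointPaths G {a, b, c, d} a c b d) :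
    exchangePair (edgeComponent (M ∪ N) a) (s, t) = exchangePair {a, b} (s, t) ∨
      exchangePair (edgeComponent (M ∪ N) a) (s, t) = exchangePair {a, d} (s, t) := by
  rw [← exchangePair_symmDiff_inter (edgeComponent (M ∪ N) a)]
  exact (hM.symmDiff_inter_edgeComponent_eq_or_eq hN hst hdist hnc).imp
    (congrArg (exchangePair · _)) (congrArg (exchangePair · _))

end IsPMOn

end PerfectMatching

section Condensation

variable {α : Type*} [DecidableEq α]

/-- Exchange of the parts of two superimposed matchings inside the component of `a`, together with
the corresponding exchange of the vertex sets that they match. -/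
noncomputable def exchangeAt (a : α)
    (x : Σ _ : Finset α × Finset α, Finset (Sym2 α) × Finset (Sym2 α)) :
    Σ _ : Finset α × Finset α, Finset (Sym2 α) × Finset (Sym2 α) :=
  let C := edgeComponent (x.2.1 ∪ x.2.2) a
  ⟨exchangePair C x.1, exchangePair C.sym2 x.2⟩

theorem exchangeAt_involutive (a : α) : Function.Involutive (exchangeAt a) := by
  intro x
  have hunion (C : Finset (Sym2 α)) :
      (exchangePair C x.2).1 ∪ (exchangePair C x.2).2 = x.2.1 ∪ x.2.2 :=
    exchange_union_exchange C x.2.1 x.2.2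
  simp only [exchangeAt, hunion, exchangePair_involutive _ _]

variable {G : SimpleGraph α} {s : Finset α} {a b c d : α}

theorem exchangeAt_mem_sigma {𝓐 𝓑 : Finset (Finset α × Finset α)}
    (h𝓐𝓑 : ∀ p ∈ 𝓐, ∀ M N, IsPMOn G p.1 M → IsPMOn G p.2 N →
      exchangePair (edgeComponent (M ∪ N) a) p ∈ 𝓑)
    {x : Σ _ : Finset α × Finset α, Finset (Sym2 α) × Finset (Sym2 α)}
    (hx : x ∈ 𝓐.sigma fun p ↦ perfectMatchings G p.1 ×ˢ perfectMatchings G p.2) :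
    exchangeAt a x ∈ 𝓑.sigma fun p ↦ perfectMatchings G p.1 ×ˢ perfectMatchings G p.2 := by
  obtain ⟨p, M, N⟩ := x
  simp only [exchangeAt, exchangePair, mem_sigma, mem_product, mem_perfectMatchings] at hx ⊢
  obtain ⟨hp, hM, hN⟩ := hx
  refine ⟨h𝓐𝓑 p hp M N hM hN, hM.exchange hN edgeClosed_edgeComponent, hN.exchange hM ?_⟩
  rw [union_comm]
  exact edgeClosed_edgeComponent

theorem sum_pmCount_mul_pmCount_eq_of_exchange {𝓐 𝓑 : Finset (Finset α × Finset α)}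
    (h𝓐𝓑 : ∀ p ∈ 𝓐, ∀ M N, IsPMOn G p.1 M → IsPMOn G p.2 N →
      exchangePair (edgeComponent (M ∪ N) a) p ∈ 𝓑)
    (h𝓑𝓐 : ∀ p ∈ 𝓑, ∀ M N, IsPMOn G p.1 M → IsPMOn G p.2 N →
      exchangePair (edgeComponent (M ∪ N) a) p ∈ 𝓐) :
    ∑ p ∈ 𝓐, pmCount G p.1 * pmCount G p.2 = ∑ p ∈ 𝓑, pmCount G p.1 * pmCount G p.2 := by
  have := card_nbij' (exchangeAt a) (exchangeAt a)
    (fun _ ↦ exchangeAt_mem_sigma h𝓐𝓑) (fun _ ↦ exchangeAt_mem_sigma h𝓑𝓐)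
    (fun x _ ↦ exchangeAt_involutive a x) (fun x _ ↦ exchangeAt_involutive a x)
  simpa only [card_sigma, card_product, card_perfectMatchings] using this

theorem sum_pmCount_mul_pmCount_eq_of_not_disjointPaths {𝓐 𝓑 : Finset (Finset α × Finset α)}
    (hdist : [a, b, c, d].Nodup) (hnc : ¬ DisjointPaths G {a, b, c, d} a c b d)
    (hX : ∀ p ∈ 𝓐 ∪ 𝓑, p.1 ∆ p.2 = {a, b, c, d})
    (h𝓐𝓑 : ∀ p ∈ 𝓐, exchangePair {a, b} p ∈ 𝓑 ∧ exchangePair {a, d} p ∈ 𝓑)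
    (h𝓑𝓐 : ∀ p ∈ 𝓑, exchangePair {a, b} p ∈ 𝓐 ∧ exchangePair {a, d} p ∈ 𝓐) :
    ∑ p ∈ 𝓐, pmCount G p.1 * pmCount G p.2 = ∑ p ∈ 𝓑, pmCount G p.1 * pmCount G p.2 := by
  refine sum_pmCount_mul_pmCount_eq_of_exchange (a := a) (fun p hp M N hM hN ↦ ?_)
    fun p hp M N hM hN ↦ ?_
  · rcases hM.exchangePair_edgeComponent_eq_or_eq hN (hX p (mem_union_left _ hp)) hdist hnc
      with hab | had
    · exact hab ▸ (h𝓐𝓑 p hp).1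
    · exact had ▸ (h𝓐𝓑 p hp).2
  · rcases hM.exchangePair_edgeComponent_eq_or_eq hN (hX p (mem_union_right _ hp)) hdist hnc
      with hab | had
    · exact hab ▸ (h𝓑𝓐 p hp).1
    · exact had ▸ (h𝓑𝓐 p hp).2

theorem graphical_condensation_four_vertices_general (hs : {a, b, c, d} ⊆ s)
    (hdist : [a, b, c, d].Nodup) (hnc : ¬ DisjointPaths G {a, b, c, d} a c b d) :
    pmCount G s * pmCount G (s \ {a, b, c, d}) +
      pmCount G (s \ {a, c}) * pmCount G (s \ {b, d}) =
    pmCount G (s \ {a, b}) * pmCount G (s \ {c, d}) +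
      pmCount G (s \ {a, d}) * pmCount G (s \ {b, c}) := by
  let 𝓐 : Finset (Finset α × Finset α) := {(s, s \ {a, b, c, d}), (s \ {b, d}, s \ {a, c})}
  let 𝓑 : Finset (Finset α × Finset α) := {(s \ {a, b}, s \ {c, d}), (s \ {a, d}, s \ {b, c})}
  have hX : ∀ p ∈ 𝓐 ∪ 𝓑, p.1 ∆ p.2 = {a, b, c, d} := by
    simp only [𝓐, 𝓑, mem_union, mem_insert, mem_singleton]
    rintro p ((rfl | rfl) | (rfl | rfl)) <;> grind [mem_symmDiff]
  have hab₁ : exchangePair {a, b} (s, s \ {a, b, c, d}) = (s \ {a, b}, s \ {c, d}) := by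
    ext v <;> grind [exchangePair, mem_exchange]
  have had₁ : exchangePair {a, d} (s, s \ {a, b, c, d}) = (s \ {a, d}, s \ {b, c}) := by
    ext v <;> grind [exchangePair, mem_exchange]
  have hab₂ : exchangePair {a, b} (s \ {b, d}, s \ {a, c}) = (s \ {a, d}, s \ {b, c}) := by
    ext v <;> grind [exchangePair, mem_exchange]
  have had₂ : exchangePair {a, d} (s \ {b, d}, s \ {a, c}) = (s \ {a, b}, s \ {c, d}) := by
    ext v <;> grind [exchangePair, mem_exchange]
  have hsum := sum_pmCount_mul_pmCount_eq_of_not_disjointPaths (𝓐 := 𝓐) (𝓑 := 𝓑) hdist hnc hX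
    (by simp [𝓐, 𝓑, hab₁, had₁, hab₂, had₂])
    (by simp [𝓐, 𝓑, exchangePair_eq_comm.1 hab₁, exchangePair_eq_comm.1 had₁,
      exchangePair_eq_comm.1 hab₂, exchangePair_eq_comm.1 had₂])
  have hne𝓐 : s ≠ s \ {b, d} := ne_of_mem_of_not_mem' (a := b) (hs (by simp)) (by simp)
  have hne𝓑 : s \ {a, b} ≠ s \ {a, d} := ne_of_mem_of_not_mem' (a := d) (by grind) (by simp)
  rwa [sum_pair (hne𝓐 <| congrArg Prod.fst ·), sum_pair (hne𝓑 <| congrArg Prod.fst ·),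
    mul_comm (pmCount G (s \ {b, d}))] at hsum

end Condensation

/-- Graphical condensation for four vertices (Proposition 1.1). -/
theorem graphical_condensation_four_vertices {α : Type*} [Fintype α] [DecidableEq α]
    (G : SimpleGraph α) (a b c d : α)
    (hdist : ([a, b, c, d] : List α).Nodup)
    (hnc : ¬ DisjointPaths G {a, b, c, d} a c b d) :
    pmCount G Finset.univ * pmCount G (Finset.univ \ {a, b, c, d}) +
      pmCount G (Finset.univ \ {a, c}) * pmCount G (Finset.univ \ {b, d}) =
    pmCount G (Finset.univ \ {a, b}) * pmCount G (Finset.univ \ {c, d}) +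
      pmCount G (Finset.univ \ {a, d}) * pmCount G (Finset.univ \ {b, c}) :=
  graphical_condensation_four_vertices_general (subset_univ _) hdist hnc
end

section
/- Let G be a finite simple bipartite graph with bipartition classes U and V each of size n, with edge weights in a commutative ring, let 2 ≤ k ≤ n, and let a_1, b_1, …, a_k, b_k be distinct vertices with A = {a_1,…,a_k} ⊆ U and B = {b_1,…,b_k} ⊆ V such that G is noncrossing with respect to the cyclic sequence (a_1, b_1, a_2, b_2, …, a_k, b_k). Then for every partition of A into two disjoint subsets A_1, A_2: M(G)·M(G−A−B) = Σ_{Y⊆B, |Y| = |A_1|} M(G−A_1−Y)·M(G−A_2−(B∖Y)). -/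
/-!
Superpose a perfect matching `M` of `G - S` with a perfect matching `N` of `G - (T \ S)`, where
`S ⊆ T` and `T = A ∪ B` is the set of terminals. All degrees are at most `2` and the terminals have
degree at most `1`, so each component contains at most two terminals, and by parity none or two.
Noncrossing forces the terminals strictly between two linked ones to be linked among themselves,
so they are even in number, and therefore no two vertices of `A` are linked. Exchanging `M` and `N`
on the components that meet `X ⊆ A` is then a weight-preserving involution that replaces `S ∩ A` by
its symmetric difference with `X`. Hence, for every graph, bipartite or not, the sum of
`M(G - S) M(G - (T \ S))` over the `S` with `S ∩ A = X` does not depend on `X`. In the bipartite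
case balance kills all the terms but those with `|S ∩ B| = |X|`; compare `X = ∅` with `X = A₁`.
-/

open Finset
open scoped symmDiff

section DegreeAtMostTwo

variable {α : Type*} [Fintype α] {H : SimpleGraph α} [DecidableRel H.Adj]

lemma card_filter_degree_le_one_le_two (hconn : H.Connected) (hdeg : ∀ v, H.degree v ≤ 2) :
    #{v | H.degree v ≤ 1} ≤ 2 := by
  classical
  have tree_bound : Fintype.card α ≤ #H.edgeFinset + 1 := by
    simpa only [Nat.card_eq_fintype_card, ← SimpleGraph.edgeFinset_card]
      using hconn.card_vert_le_card_edgeSet_add_one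
  have degree_bound : ∑ v, (H.degree v + if H.degree v ≤ 1 then 1 else 0) ≤ ∑ _v : α, 2 :=
    sum_le_sum fun v _ ↦ by have := hdeg v; split_ifs <;> omega
  rw [sum_add_distrib, H.sum_degrees_eq_twice_card_edges, ← card_filter, sum_const, card_univ,
    smul_eq_mul] at degree_bound
  omega

lemma eq_or_eq_of_reachable_of_degree_le_one (hdeg : ∀ v, H.degree v ≤ 2) {x y z : α}
    (hx : H.degree x ≤ 1) (hy : H.degree y ≤ 1) (hz : H.degree z ≤ 1) (hxy : x ≠ y)
    (hrxy : H.Reachable x y) (hrxz : H.Reachable x z) : z = x ∨ z = y := by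
  classical
  let K := H.connectedComponentMk x
  have degree_le (v : K) : K.toSimpleGraph.degree v ≤ H.degree v :=
    (SimpleGraph.Copy.mk K.toSimpleGraph_hom Subtype.val_injective).degree_le v
  have hyK : y ∈ K := SimpleGraph.ConnectedComponent.sound hrxy.symm
  have hzK : z ∈ K := SimpleGraph.ConnectedComponent.sound hrxz.symm
  by_contra! hne
  refine (card_filter_degree_le_one_le_two K.connected_toSimpleGraph fun v ↦
    (degree_le v).trans (hdeg v)).not_gt (two_lt_card.2 ⟨⟨x, rfl⟩, ?_, ⟨y, hyK⟩, ?_, ⟨z, hzK⟩, ?_,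
      Subtype.coe_ne_coe.1 hxy, Subtype.coe_ne_coe.1 hne.1.symm, Subtype.coe_ne_coe.1 hne.2.symm⟩)
  · exact mem_filter_univ _ |>.2 ((degree_le _).trans hx)
  · exact mem_filter_univ _ |>.2 ((degree_le _).trans hy)
  · exact mem_filter_univ _ |>.2 ((degree_le _).trans hz)

end DegreeAtMostTwo

namespace IsPMOn

variable {α : Type*} {G : SimpleGraph α} {s t : Finset α} {M N : Finset (Sym2 α)}

lemma adj (hM : IsPMOn G s M) {u v : α} (huv : s(u, v) ∈ M) : G.Adj u v :=
  (hM.1 _ huv).1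

lemma left_mem (hM : IsPMOn G s M) {u v : α} (huv : s(u, v) ∈ M) : u ∈ s :=
  (hM.1 _ huv).2 u (Sym2.mem_mk_left u v)

lemma right_mem (hM : IsPMOn G s M) {u v : α} (huv : s(u, v) ∈ M) : v ∈ s :=
  (hM.1 _ huv).2 v (Sym2.mem_mk_right u v)

lemma existsUnique_partner (hM : IsPMOn G s M) {u : α} (hu : u ∈ s) : ∃! v, s(u, v) ∈ M := by
  obtain ⟨e, ⟨he, ⟨v, rfl⟩⟩, e_unique⟩ := hM.2 u hu
  exact ⟨v, he, fun v' hv' ↦ Sym2.congr_right.1 (e_unique _ ⟨hv', Sym2.mem_mk_left u v'⟩)⟩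

lemma exists_partner (hM : IsPMOn G s M) :
    ∃ f : α → α, ∀ v ∈ s, s(v, f v) ∈ M ∧ f (f v) = v := by
  choose! f hf using fun v (hv : v ∈ s) ↦ (hM.existsUnique_partner hv).exists
  refine ⟨f, fun v hv ↦ ⟨hf v hv, ?_⟩⟩
  have hfv : f v ∈ s := hM.right_mem (hf v hv)
  exact (hM.existsUnique_partner hfv).unique (hf _ hfv) (Sym2.eq_swap ▸ hf v hv)

lemma even_card (hM : IsPMOn G s M) : Even #s := by
  obtain ⟨f, hf⟩ := hM.exists_partner
  have sum_one : ∑ _ ∈ s, (1 : ZMod 2) = 0 :=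
    sum_involution (fun v _ ↦ f v) (fun _ _ ↦ CharTwo.add_self_eq_zero 1)
      (fun v hv _ ↦ (hM.adj (hf v hv).1).ne') (fun v hv ↦ hM.right_mem (hf v hv).1)
      (fun v hv ↦ (hf v hv).2)
  rwa [sum_const, nsmul_one, ZMod.natCast_eq_zero_iff_even] at sum_one

lemma card_filter_mk_mem [Fintype α] [DecidableEq α] (hM : IsPMOn G s M) (u : α) :
    #{v | s(u, v) ∈ M} = if u ∈ s then 1 else 0 := by
  split_ifs with hu
  · obtain ⟨v, hv, v_unique⟩ := hM.existsUnique_partner hu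
    refine card_eq_one.2 ⟨v, eq_singleton_iff_unique_mem.2 ⟨by simpa using hv, ?_⟩⟩
    simpa using v_unique
  · exact card_eq_zero.2 (filter_eq_empty_iff.2 fun v _ huv ↦ hu (hM.left_mem huv))

lemma filter (hM : IsPMOn G s M) {p : Sym2 α → Prop} {q : α → Prop} [DecidablePred p]
    [DecidablePred q] (hpq : ∀ e ∈ M, ∀ v ∈ e, (p e ↔ q v)) :
    IsPMOn G {v ∈ s | q v} {e ∈ M | p e} := by
  refine ⟨fun e he ↦ ?_, fun v hv ↦ ?_⟩
  · obtain ⟨heM, hpe⟩ := mem_filter.1 he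
    exact ⟨(hM.1 e heM).1, fun v hv ↦
      mem_filter.2 ⟨(hM.1 e heM).2 v hv, (hpq e heM v hv).1 hpe⟩⟩
  · obtain ⟨hvs, hqv⟩ := mem_filter.1 hv
    obtain ⟨e, ⟨he, hve⟩, e_unique⟩ := hM.2 v hvs
    exact ⟨e, ⟨mem_filter.2 ⟨he, (hpq e he v hve).2 hqv⟩, hve⟩,
      fun e' he' ↦ e_unique e' ⟨mem_of_mem_filter e' he'.1, he'.2⟩⟩

variable [DecidableEq α]

lemma union (hM : IsPMOn G s M) (hN : IsPMOn G t N) (hst : Disjoint s t) :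
    IsPMOn G (s ∪ t) (M ∪ N) := by
  have hst' := disjoint_left.1 hst
  refine ⟨fun e he ↦ ?_, fun v hv ↦ ?_⟩
  · rcases mem_union.1 he with he | he
    · exact ⟨(hM.1 e he).1, fun v hv ↦ mem_union_left _ ((hM.1 e he).2 v hv)⟩
    · exact ⟨(hN.1 e he).1, fun v hv ↦ mem_union_right _ ((hN.1 e he).2 v hv)⟩
  · rcases mem_union.1 hv with hv | hv
    · obtain ⟨e, ⟨he, hve⟩, e_unique⟩ := hM.2 v hv
      refine ⟨e, ⟨mem_union_left _ he, hve⟩, fun e' ⟨he', hve'⟩ ↦ e_unique e' ⟨?_, hve'⟩⟩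
      exact (mem_union.1 he').resolve_right fun h ↦ hst' hv ((hN.1 e' h).2 v hve')
    · obtain ⟨e, ⟨he, hve⟩, e_unique⟩ := hN.2 v hv
      refine ⟨e, ⟨mem_union_right _ he, hve⟩, fun e' ⟨he', hve'⟩ ↦ e_unique e' ⟨?_, hve'⟩⟩
      exact (mem_union.1 he').resolve_left fun h ↦ hst' ((hM.1 e' h).2 v hve') hv

lemma card_inter_eq_card_inter [Fintype α] {U V : Finset α} (hM : IsPMOn G s M)
    (hbip : IsBipartition G U V) : #(s ∩ U) = #(s ∩ V) := by
  obtain ⟨f, hf⟩ := hM.exists_partner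
  have hUV := disjoint_left.1 hbip.1
  have mapsTo_V : ∀ v ∈ s ∩ U, f v ∈ s ∩ V := fun v hv ↦ by
    have := hM.right_mem (hf v (mem_inter.1 hv).1).1
    have := hbip.2.2 (hM.adj (hf v (mem_inter.1 hv).1).1)
    grind
  have mapsTo_U : ∀ v ∈ s ∩ V, f v ∈ s ∩ U := fun v hv ↦ by
    have := hM.right_mem (hf v (mem_inter.1 hv).1).1
    have := hbip.2.2 (hM.adj (hf v (mem_inter.1 hv).1).1)
    grind
  exact card_nbij' f f mapsTo_V mapsTo_U (fun v hv ↦ (hf v (mem_inter.1 hv).1).2)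
    (fun v hv ↦ (hf v (mem_inter.1 hv).1).2)

end IsPMOn

section Superposition

variable {α : Type*} {M N : Finset (Sym2 α)}

/-- The superposition of two matchings: the simple graph whose edges are those of `M` and of `N`,
a common edge being counted once. -/
def superposition (M N : Finset (Sym2 α)) : SimpleGraph α :=
  SimpleGraph.fromEdgeSet {e | e ∈ M ∨ e ∈ N}

lemma superposition_adj {u v : α} :
    (superposition M N).Adj u v ↔ (s(u, v) ∈ M ∨ s(u, v) ∈ N) ∧ u ≠ v := by
  simp only [superposition, SimpleGraph.fromEdgeSet_adj, Set.mem_ofPred_eq]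

lemma superposition_le {G : SimpleGraph α} {s t : Finset α} (hM : IsPMOn G s M)
    (hN : IsPMOn G t N) : superposition M N ≤ G := fun _ _ huv ↦
  (superposition_adj.1 huv).1.elim hM.adj hN.adj

/-- No edge of `E` leaves `C`: every edge with one end in `C` has both ends in `C`. -/
def IsSaturated (E : Finset (Sym2 α)) (C : Finset α) : Prop :=
  ∀ e ∈ E, ∀ u ∈ e, ∀ v ∈ e, u ∈ C → v ∈ C

lemma IsSaturated.exists_mem_iff {E : Finset (Sym2 α)} {C : Finset α} (hC : IsSaturated E C)
    {e : Sym2 α} (he : e ∈ E) {v : α} (hv : v ∈ e) : (∃ u ∈ e, u ∈ C) ↔ v ∈ C :=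
  ⟨fun ⟨u, hue, huC⟩ ↦ hC e he u hue v hv huC, fun hvC ↦ ⟨v, hv, hvC⟩⟩

variable [Fintype α]

open Classical in
/-- The union of the connected components of `H` that meet `X`. -/
noncomputable def reachableFinset (H : SimpleGraph α) (X : Finset α) : Finset α :=
  {v | ∃ x ∈ X, H.Reachable x v}

lemma mem_reachableFinset {H : SimpleGraph α} {X : Finset α} {v : α} :
    v ∈ reachableFinset H X ↔ ∃ x ∈ X, H.Reachable x v := by
  simp only [reachableFinset, mem_filter_univ]

lemma subset_reachableFinset (H : SimpleGraph α) (X : Finset α) : X ⊆ reachableFinset H X :=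
  fun x hx ↦ mem_reachableFinset.2 ⟨x, hx, .rfl⟩

variable [DecidableEq α]

lemma isSaturated_reachableFinset_superposition (M N : Finset (Sym2 α)) (X : Finset α) :
    IsSaturated (M ∪ N) (reachableFinset (superposition M N) X) := by
  intro e he u hu v hv huC
  obtain rfl | huv := eq_or_ne u v
  · exact huC
  · obtain rfl : e = s(u, v) := (Sym2.mem_and_mem_iff huv).1 ⟨hu, hv⟩
    obtain ⟨x, hx, hxu⟩ := mem_reachableFinset.1 huC
    have adj_uv := superposition_adj.2 ⟨mem_union.1 he, huv⟩
    exact mem_reachableFinset.2 ⟨x, hx, hxu.trans adj_uv.reachable⟩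

lemma degree_superposition_le {G : SimpleGraph α} {s t : Finset α}
    [DecidableRel (superposition M N).Adj] (hM : IsPMOn G s M) (hN : IsPMOn G t N) (v : α) :
    (superposition M N).degree v ≤ (if v ∈ s then 1 else 0) + if v ∈ t then 1 else 0 := by
  rw [← hM.card_filter_mk_mem v, ← hN.card_filter_mk_mem v]
  refine (card_le_card fun u hu ↦ ?_).trans (card_union_le _ _)
  rw [SimpleGraph.mem_neighborFinset, superposition_adj] at hu
  simpa only [mem_union, mem_filter_univ] using hu.1

end Superposition

section SwapOn

variable {α : Type*} [DecidableEq α]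

open Classical in
/-- The edge set that agrees with `N` on the edges meeting `C` and with `M` on all the others. -/
noncomputable def swapOn (C : Finset α) (M N : Finset (Sym2 α)) : Finset (Sym2 α) :=
  {e ∈ M | ¬ ∃ v ∈ e, v ∈ C} ∪ {e ∈ N | ∃ v ∈ e, v ∈ C}

variable (C : Finset α) (M N : Finset (Sym2 α))

lemma swapOn_swapOn : swapOn C (swapOn C M N) (swapOn C N M) = M := by
  ext e
  by_cases he : ∃ v ∈ e, v ∈ C <;> simp [swapOn, he]

lemma superposition_swapOn : superposition (swapOn C M N) (swapOn C N M) = superposition M N := by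
  ext u v
  simp only [superposition_adj, swapOn, mem_union, mem_filter]
  tauto

lemma prod_swapOn_mul_prod_swapOn {R : Type*} [CommMonoid R] (w : Sym2 α → R) :
    (∏ e ∈ swapOn C M N, w e) * ∏ e ∈ swapOn C N M, w e = (∏ e ∈ M, w e) * ∏ e ∈ N, w e := by
  classical
  have prod_swapOn (M N : Finset (Sym2 α)) : ∏ e ∈ swapOn C M N, w e =
      (∏ e ∈ M with ¬ ∃ v ∈ e, v ∈ C, w e) * ∏ e ∈ N with ∃ v ∈ e, v ∈ C, w e :=
    prod_union (disjoint_filter_filter_not N M _).symm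
  rw [prod_swapOn, prod_swapOn, ← prod_filter_mul_prod_filter_not M fun e ↦ ∃ v ∈ e, v ∈ C,
    ← prod_filter_mul_prod_filter_not N fun e ↦ ∃ v ∈ e, v ∈ C]
  ac_rfl

variable {C M N}

lemma IsPMOn.swapOn {G : SimpleGraph α} {s t : Finset α} (hM : IsPMOn G s M) (hN : IsPMOn G t N)
    (hC : IsSaturated (M ∪ N) C) : IsPMOn G (s \ C ∪ t ∩ C) (swapOn C M N) := by
  classical
  rw [sdiff_eq_filter, ← filter_mem_eq_inter]
  refine (hM.filter fun e he v hv ↦ ?_).union (hN.filter fun e he v hv ↦ ?_)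
    (disjoint_filter_filter_not t s _).symm
  · exact not_congr (hC.exists_mem_iff (mem_union_left N he) hv)
  · exact hC.exists_mem_iff (mem_union_right M he) hv

end SwapOn

/-- `M` and `N` are perfect matchings of `G - S` and `G - (T \ S)`: together they leave each
terminal in `T` uncovered once, and `S` consists of those left uncovered by `M`. -/
structure IsMatchingPair {α : Type*} [Fintype α] [DecidableEq α] (G : SimpleGraph α)
    (T S : Finset α) (M N : Finset (Sym2 α)) : Prop where
  subset : S ⊆ T
  left : IsPMOn G (univ \ S) M
  right : IsPMOn G (univ \ (T \ S)) N

namespace IsMatchingPair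

variable {α : Type*} [Fintype α] [DecidableEq α] {G : SimpleGraph α} {T S C : Finset α}
  {M N : Finset (Sym2 α)}

lemma swapOn (h : IsMatchingPair G T S M N) (hC : IsSaturated (M ∪ N) C) :
    IsMatchingPair G T (S ∆ (T ∩ C)) (swapOn C M N) (swapOn C N M) where
  subset := by have := h.subset; grind [mem_symmDiff]
  left := by
    have vertices_eq : univ \ (S ∆ (T ∩ C)) = (univ \ S) \ C ∪ (univ \ (T \ S)) ∩ C := by
      have := h.subset; grind [mem_symmDiff]
    exact vertices_eq ▸ h.left.swapOn h.right hC
  right := by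
    have vertices_eq :
        univ \ (T \ (S ∆ (T ∩ C))) = (univ \ (T \ S)) \ C ∪ (univ \ S) ∩ C := by
      have := h.subset; grind [mem_symmDiff]
    exact vertices_eq ▸ h.right.swapOn h.left (union_comm M N ▸ hC)

lemma even_card_inter (h : IsMatchingPair G T S M N) (hC : IsSaturated (M ∪ N) C) :
    Even #(T ∩ C) := by
  classical
  have even_left : Even #(C \ S) := by
    have := (h.left.filter fun e he v hv ↦ hC.exists_mem_iff (mem_union_left N he) hv).even_card
    rwa [filter_mem_eq_inter, inter_comm, ← inter_sdiff_assoc, inter_univ] at this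
  have even_right : Even #(C \ (T \ S)) := by
    have := (h.right.filter fun e he v hv ↦ hC.exists_mem_iff (mem_union_right M he) hv).even_card
    rwa [filter_mem_eq_inter, inter_comm, ← inter_sdiff_assoc, inter_univ] at this
  have card_inter : #(T ∩ C) = #(C ∩ S) + #(C ∩ (T \ S)) := by
    have := h.subset
    rw [← card_union_of_disjoint (by grind [disjoint_left])]
    congr 1; grind
  have := card_inter_add_card_sdiff C S
  have := card_inter_add_card_sdiff C (T \ S)
  grind

lemma eq_or_eq_of_reachable (h : IsMatchingPair G T S M N) {x y z : α} (hx : x ∈ T) (hy : y ∈ T)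
    (hz : z ∈ T) (hxy : x ≠ y) (hrxy : (superposition M N).Reachable x y)
    (hrxz : (superposition M N).Reachable x z) : z = x ∨ z = y := by
  classical
  have degree_le := degree_superposition_le h.left h.right
  have degree_le_one {v : α} (hv : v ∈ T) : (superposition M N).degree v ≤ 1 := by
    have := degree_le v
    grind
  refine eq_or_eq_of_reachable_of_degree_le_one (fun v ↦ ?_) (degree_le_one hx) (degree_le_one hy)
    (degree_le_one hz) hxy hrxy hrxz
  have := degree_le v
  grind

lemma disjointPaths (h : IsMatchingPair G T S M N) {x₁ y₁ x₂ y₂ : α}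
    (hx₁ : x₁ ∈ T) (hy₁ : y₁ ∈ T) (hx₂ : x₂ ∈ T) (hy₂ : y₂ ∈ T) (hne₁ : x₁ ≠ y₁) (hne₂ : x₂ ≠ y₂)
    (hr₁ : (superposition M N).Reachable x₁ y₁) (hr₂ : (superposition M N).Reachable x₂ y₂)
    (hnr : ¬ (superposition M N).Reachable x₁ x₂) : DisjointPaths G {x | x ∈ T} x₁ y₁ x₂ y₂ := by
  have avoids {x y : α} (hx : x ∈ T) (hy : y ∈ T) (hne : x ≠ y) (p : (superposition M N).Walk x y)
      (u : α) (hu : u ∈ p.support) (hux : u ≠ x) (huy : u ≠ y) : u ∉ {v | v ∈ T} := fun huT ↦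
    (h.eq_or_eq_of_reachable hx hy huT hne p.reachable (p.takeUntil u hu).reachable).elim hux huy
  obtain ⟨p, hp⟩ := hr₁.exists_isPath
  obtain ⟨q, hq⟩ := hr₂.exists_isPath
  have hle := superposition_le h.left h.right
  refine ⟨p.mapLe hle, q.mapLe hle, hp.mapLe hle, hq.mapLe hle, ?_⟩
  simp only [SimpleGraph.Walk.support_mapLe_eq_support]
  refine ⟨fun u hup huq ↦ hnr ?_, avoids hx₁ hy₁ hne₁ p, avoids hx₂ hy₂ hne₂ q⟩
  exact (p.takeUntil u hup).reachable.trans (q.takeUntil u huq).reachable.symm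

section Noncrossing

variable {L : List α}

lemma between_of_reachable (h : IsMatchingPair G L.toFinset S M N) (hL : L.Nodup)
    (hnc : NoncrossingList G L) {p q r t : Fin L.length} (hpr : p < r) (hrq : r < q)
    (hrpq : (superposition M N).Reachable (L.get p) (L.get q))
    (hrrt : (superposition M N).Reachable (L.get r) (L.get t)) : p < t ∧ t < q := by
  have get_ne {i j : Fin L.length} (hij : i ≠ j) : L.get i ≠ L.get j :=
    (List.nodup_iff_injective_get.1 hL).ne hij
  have get_mem (i : Fin L.length) : L.get i ∈ L.toFinset := List.mem_toFinset.2 (L.get_mem i)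
  have not_reachable : ¬ (superposition M N).Reachable (L.get p) (L.get r) := fun hrpr ↦
    (h.eq_or_eq_of_reachable (get_mem p) (get_mem q) (get_mem r) (get_ne (hpr.trans hrq).ne) hrpq
      hrpr).elim (get_ne hpr.ne') (get_ne hrq.ne)
  have terminals_eq : {x | x ∈ L.toFinset} = {x | x ∈ L} := by simp only [List.mem_toFinset]
  have htp : t ≠ p := by rintro rfl; exact not_reachable hrrt.symm
  have htq : t ≠ q := by rintro rfl; exact not_reachable (hrpq.trans hrrt.symm)
  by_contra hout
  have hrt : r ≠ t := by rintro rfl; exact hout ⟨hpr, hrq⟩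
  obtain htp | hqt : t < p ∨ q < t := by omega
  · refine hnc t p r q htp hpr hrq (terminals_eq ▸ h.disjointPaths (get_mem t) (get_mem r)
      (get_mem p) (get_mem q) (get_ne hrt.symm) (get_ne (hpr.trans hrq).ne) hrrt.symm hrpq ?_)
    exact fun hrtp ↦ not_reachable (hrrt.trans hrtp).symm
  · exact hnc p r q t hpr hrq hqt (terminals_eq ▸ h.disjointPaths (get_mem p) (get_mem q)
      (get_mem r) (get_mem t) (get_ne (hpr.trans hrq).ne) (get_ne hrt) hrpq hrrt not_reachable)

lemma mod_two_ne_of_reachable (h : IsMatchingPair G L.toFinset S M N) (hL : L.Nodup)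
    (hnc : NoncrossingList G L) {p q : Fin L.length} (hpq : p < q)
    (hrpq : (superposition M N).Reachable (L.get p) (L.get q)) : (p : ℕ) % 2 ≠ q % 2 := by
  set C := reachableFinset (superposition M N) ((Ioo p q).image L.get)
  have terminals_in_C : L.toFinset ∩ C = (Ioo p q).image L.get := by
    refine Subset.antisymm (fun v hv ↦ ?_) fun v hv ↦
      mem_inter.2 ⟨?_, subset_reachableFinset _ _ hv⟩
    · obtain ⟨hvL, hvC⟩ := mem_inter.1 hv
      obtain ⟨t, rfl⟩ := List.mem_iff_get.1 (List.mem_toFinset.1 hvL)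
      obtain ⟨_, hx, hrrt⟩ := mem_reachableFinset.1 hvC
      obtain ⟨r, hr, rfl⟩ := mem_image.1 hx
      obtain ⟨hpr, hrq⟩ := mem_Ioo.1 hr
      exact mem_image_of_mem _ (mem_Ioo.2 (h.between_of_reachable hL hnc hpr hrq hrpq hrrt))
    · obtain ⟨r, -, rfl⟩ := mem_image.1 hv
      exact List.mem_toFinset.2 (L.get_mem r)
  have even_between : Even ((q : ℕ) - p - 1) := by
    rw [← Fin.card_Ioo, ← card_image_of_injective _ (List.nodup_iff_injective_get.1 hL),
      ← terminals_in_C]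
    exact h.even_card_inter (isSaturated_reachableFinset_superposition M N _)
  have : (p : ℕ) < q := hpq
  grind

lemma eq_of_reachable_of_mod_two_eq (h : IsMatchingPair G L.toFinset S M N) (hL : L.Nodup)
    (hnc : NoncrossingList G L) {p q : Fin L.length} (hmod : (p : ℕ) % 2 = q % 2)
    (hrpq : (superposition M N).Reachable (L.get p) (L.get q)) : p = q := by
  rcases lt_trichotomy p q with hpq | hpq | hqp
  · exact absurd hmod (h.mod_two_ne_of_reachable hL hnc hpq hrpq)
  · exact hpq
  · exact absurd hmod.symm (h.mod_two_ne_of_reachable hL hnc hqp hrpq.symm)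

end Noncrossing

end IsMatchingPair

section Condensation

variable {α R : Type*} [Fintype α] [DecidableEq α] [CommRing R] {G : SimpleGraph α}
  {T A X : Finset α}

/-- The sum of `M(G - S) M(G - (T \ S))` over the sets `S` of terminals whose trace on `A` is the
prescribed set `X`. -/
noncomputable def condensationSum (G : SimpleGraph α) (w : Sym2 α → R) (T A X : Finset α) : R :=
  ∑ S ∈ T.powerset with S ∩ A = X, pmSum G w (univ \ S) * pmSum G w (univ \ (T \ S))

open Classical in
lemma condensationSum_eq_sum_isMatchingPair (w : Sym2 α → R) :
    condensationSum G w T A X =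
      ∑ c : Finset α × Finset (Sym2 α) × Finset (Sym2 α)
        with IsMatchingPair G T c.1 c.2.1 c.2.2 ∧ c.1 ∩ A = X,
        (∏ e ∈ c.2.1, w e) * ∏ e ∈ c.2.2, w e := by
  simp only [condensationSum, pmSum, sum_mul_sum, ← sum_product']
  rw [sum_finset_product]
  intro c
  simp only [mem_filter, mem_univ, true_and, mem_powerset, mem_product]
  exact ⟨fun ⟨hc, hX⟩ ↦ ⟨⟨hc.subset, hX⟩, hc.left, hc.right⟩,
    fun ⟨⟨hT, hX⟩, hl, hr⟩ ↦ ⟨⟨hT, hl, hr⟩, hX⟩⟩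

lemma reachableFinset_inter_eq {H : SimpleGraph α} (hXA : X ⊆ A)
    (hA : ∀ x ∈ A, ∀ y ∈ A, H.Reachable x y → x = y) : reachableFinset H X ∩ A = X := by
  refine Subset.antisymm (fun y hy ↦ ?_) (subset_inter (subset_reachableFinset H X) hXA)
  obtain ⟨hyX, hyA⟩ := mem_inter.1 hy
  obtain ⟨x, hx, hxy⟩ := mem_reachableFinset.1 hyX
  exact hA x (hXA hx) y hyA hxy ▸ hx

/-- The involution behind condensation: exchange the matchings on the components of their
superposition that meet `X`, which moves the terminals there from one matching to the other. -/
noncomputable def swapComponents (T X : Finset α)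
    (c : Finset α × Finset (Sym2 α) × Finset (Sym2 α)) :
    Finset α × Finset (Sym2 α) × Finset (Sym2 α) :=
  let C := reachableFinset (superposition c.2.1 c.2.2) X
  (c.1 ∆ (T ∩ C), swapOn C c.2.1 c.2.2, swapOn C c.2.2 c.2.1)

lemma swapComponents_involutive (T X : Finset α) :
    Function.Involutive (swapComponents T X) := by
  rintro ⟨S, M, N⟩
  simp only [swapComponents, superposition_swapOn, swapOn_swapOn, symmDiff_symmDiff_cancel_right]

theorem condensationSum_eq_of_separated (w : Sym2 α → R) (hAT : A ⊆ T) (hXA : X ⊆ A)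
    (hsep : ∀ S M N, IsMatchingPair G T S M N →
      ∀ x ∈ A, ∀ y ∈ A, (superposition M N).Reachable x y → x = y) :
    condensationSum G w T A X = condensationSum G w T A ∅ := by
  classical
  have trace_swap {S : Finset α} {M N : Finset (Sym2 α)} (h : IsMatchingPair G T S M N) :
      (S ∆ (T ∩ reachableFinset (superposition M N) X)) ∩ A = (S ∩ A) ∆ X := by
    have := reachableFinset_inter_eq hXA (hsep S M N h)
    grind [mem_symmDiff]
  have mapsTo {X₁ X₂ : Finset α} (hX : X₁ ∆ X = X₂)
      (c : Finset α × Finset (Sym2 α) × Finset (Sym2 α))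
      (hc : IsMatchingPair G T c.1 c.2.1 c.2.2 ∧ c.1 ∩ A = X₁) :
      IsMatchingPair G T (swapComponents T X c).1 (swapComponents T X c).2.1
        (swapComponents T X c).2.2 ∧ (swapComponents T X c).1 ∩ A = X₂ := by
    obtain ⟨hpair, rfl⟩ := hc
    simp only [swapComponents]
    refine ⟨hpair.swapOn (isSaturated_reachableFinset_superposition _ _ X), ?_⟩
    exact hX ▸ trace_swap hpair
  rw [condensationSum_eq_sum_isMatchingPair, condensationSum_eq_sum_isMatchingPair]
  refine sum_nbij' (swapComponents T X) (swapComponents T X) ?_ ?_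
    (fun c _ ↦ swapComponents_involutive T X c) (fun c _ ↦ swapComponents_involutive T X c)
    (fun c _ ↦ (prod_swapOn_mul_prod_swapOn _ _ _ w).symm)
  · simpa only [mem_filter_univ, bot_eq_empty] using mapsTo (symmDiff_self X)
  · simpa only [mem_filter_univ, bot_eq_empty] using mapsTo (bot_symmDiff X)

theorem condensationSum_eq_of_noncrossingList (w : Sym2 α → R) {L : List α} (hL : L.Nodup)
    (hnc : NoncrossingList G L) (hAL : A ⊆ L.toFinset) (hXA : X ⊆ A)
    (hA : ∀ p q : Fin L.length, L.get p ∈ A → L.get q ∈ A → (p : ℕ) % 2 = q % 2) :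
    condensationSum G w L.toFinset A X = condensationSum G w L.toFinset A ∅ := by
  refine condensationSum_eq_of_separated w hAL hXA fun S M N h x hx y hy hxy ↦ ?_
  obtain ⟨p, rfl⟩ := List.mem_iff_get.1 (List.mem_toFinset.1 (hAL hx))
  obtain ⟨q, rfl⟩ := List.mem_iff_get.1 (List.mem_toFinset.1 (hAL hy))
  rw [h.eq_of_reachable_of_mod_two_eq hL hnc (hA p q hx hy) hxy]

end Condensation

section Bipartite

lemma sum_powerset_union_filter_inter_eq {α M : Type*} [DecidableEq α] [AddCommMonoid M]
    {A B X : Finset α} (hAB : Disjoint A B) (hXA : X ⊆ A) (f : Finset α → M) :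
    ∑ S ∈ (A ∪ B).powerset with S ∩ A = X, f S = ∑ Y ∈ B.powerset, f (X ∪ Y) := by
  have hAB := disjoint_left.1 hAB
  refine sum_nbij' (fun S ↦ S \ A) (fun Y ↦ X ∪ Y) ?_ ?_ ?_ ?_ ?_ <;>
    simp only [mem_filter, mem_powerset]
  · grind
  · grind
  · grind
  · grind
  · rintro S ⟨-, rfl⟩
    rw [union_comm, sdiff_union_inter]

variable {α R : Type*} [Fintype α] [DecidableEq α] [CommRing R] {G : SimpleGraph α}
  {U V A B X : Finset α}

lemma pmSum_sdiff_eq_zero (hbip : IsBipartition G U V) (hUV : #U = #V) (w : Sym2 α → R)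
    {S : Finset α} (hS : #(S ∩ U) ≠ #(S ∩ V)) : pmSum G w (univ \ S) = 0 := by
  classical
  refine sum_eq_zero fun M hM ↦ absurd ?_ hS
  replace hM := (mem_filter.1 hM).2
  have card_eq := hM.card_inter_eq_card_inter hbip
  have card_add (W : Finset α) : #(S ∩ W) + #((univ \ S) ∩ W) = #W := by
    rw [inter_comm S, inter_comm _ W, ← inter_sdiff_assoc, inter_univ, card_inter_add_card_sdiff]
  have := card_add U
  have := card_add V
  omega

lemma condensationSum_union_eq (hbip : IsBipartition G U V) (hUV : #U = #V) (hAU : A ⊆ U)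
    (hBV : B ⊆ V) (hXA : X ⊆ A) (w : Sym2 α → R) :
    condensationSum G w (A ∪ B) A X =
      ∑ Y ∈ B.powerset with #Y = #X,
        pmSum G w (univ \ (X ∪ Y)) * pmSum G w (univ \ (A \ X ∪ B \ Y)) := by
  have hUV' := disjoint_left.1 hbip.1
  have hAB : Disjoint A B := disjoint_of_subset_left hAU (disjoint_of_subset_right hBV hbip.1)
  rw [condensationSum, sum_powerset_union_filter_inter_eq hAB hXA, eq_comm]
  refine (sum_filter_of_ne fun Y hY hne ↦ ?_).trans (sum_congr rfl fun Y hY ↦ ?_)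
  · by_contra hcard
    have trace_U : (X ∪ Y) ∩ U = X := by grind
    have trace_V : (X ∪ Y) ∩ V = Y := by grind
    refine hne (mul_eq_zero_of_left (pmSum_sdiff_eq_zero hbip hUV w ?_) _)
    rwa [trace_U, trace_V, ne_comm]
  · have terminals_eq : (A ∪ B) \ (X ∪ Y) = A \ X ∪ B \ Y := by grind
    rw [terminals_eq]

end Bipartite

section Interleave

variable {α : Type*}

lemma getElem?_flatMap_pair {ι : Type*} (f g : ι → α) (l : List ι) (m : ℕ) :
    (l.flatMap fun i ↦ [f i, g i])[2 * m]? = l[m]?.map f := by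
  induction l generalizing m with
  | nil => simp
  | cons x l ih =>
    cases m with
    | zero => simp
    | succ m => simpa [Nat.mul_succ] using ih m

variable [DecidableEq α] {k : ℕ} {a b : Fin k → α}

lemma mod_two_eq_zero_of_get_flatMap_pair_mem_image
    (hnodup : ((List.finRange k).flatMap fun i ↦ [a i, b i]).Nodup)
    {p : Fin ((List.finRange k).flatMap fun i ↦ [a i, b i]).length}
    (hp : ((List.finRange k).flatMap fun i ↦ [a i, b i]).get p ∈ univ.image a) :
    (p : ℕ) % 2 = 0 := by
  obtain ⟨i, -, hi⟩ := mem_image.1 hp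
  have a_eq : ((List.finRange k).flatMap fun i ↦ [a i, b i])[2 * (i : ℕ)]? = some (a i) := by
    simp [getElem?_flatMap_pair]
  obtain ⟨hlt, hget⟩ := List.getElem?_eq_some_iff.1 a_eq
  have := (hnodup.getElem_inj_iff (hi := hlt) (hj := p.2)).1 (hget.trans hi)
  omega

lemma toFinset_flatMap_pair (a b : Fin k → α) :
    ((List.finRange k).flatMap fun i ↦ [a i, b i]).toFinset = univ.image a ∪ univ.image b := by
  ext v
  simp [exists_or, eq_comm]

end Interleave

/-- Bipartite corollary of the generalized condensation (Corollary 2.4). -/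
theorem bipartite_condensation {α R : Type*} [Fintype α] [DecidableEq α] [CommRing R]
    (G : SimpleGraph α) (w : Sym2 α → R) (n k : ℕ)
    (U V : Finset α) (hbip : IsBipartition G U V)
    (hU : U.card = n) (hV : V.card = n)
    (hk2 : 2 ≤ k) (hkn : k ≤ n)
    (a b : Fin k → α)
    (hdist : ((List.finRange k).flatMap (fun i => [a i, b i])).Nodup)
    (hnc : NoncrossingList G ((List.finRange k).flatMap (fun i => [a i, b i])))
    (A B : Finset α) (hA : A = Finset.univ.image a) (hB : B = Finset.univ.image b)
    (hAU : A ⊆ U) (hBV : B ⊆ V)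
    (A₁ A₂ : Finset α) (hpart : A₁ ∪ A₂ = A) (hdisj : Disjoint A₁ A₂) :
    pmSum G w Finset.univ * pmSum G w (Finset.univ \ (A ∪ B)) =
    ∑ Y ∈ B.powerset.filter (fun Y => Y.card = A₁.card),
        pmSum G w (Finset.univ \ (A₁ ∪ Y)) *
          pmSum G w (Finset.univ \ (A₂ ∪ (B \ Y))) := by
  subst hA hB
  obtain rfl : A₂ = univ.image a \ A₁ := by rw [← hpart, union_sdiff_cancel_left hdisj]
  have hA₁ : A₁ ⊆ univ.image a := hpart ▸ subset_union_left
  have hcond := condensationSum_eq_of_noncrossingList w hdist hnc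
    (toFinset_flatMap_pair a b ▸ subset_union_left) hA₁ fun p q hp hq ↦
      (mod_two_eq_zero_of_get_flatMap_pair_mem_image hdist hp).trans
        (mod_two_eq_zero_of_get_flatMap_pair_mem_image hdist hq).symm
  have sum_union_eq {X : Finset α} (hX : X ⊆ univ.image a) :=
    condensationSum_union_eq hbip (hU.trans hV.symm) hAU hBV hX w
  rw [toFinset_flatMap_pair, sum_union_eq hA₁, sum_union_eq (empty_subset _)] at hcond
  simpa [filter_eq'] using hcond.symm
end
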